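/- Fix an integer j ≥ 0 and let ν₀,…,ν_j ∈ ℂ be unit vectors such that the squares ν₀²,…,ν_j² are pairwise distinct. Then there exist complex constants a(n,k) for 0 ≤ n,k ≤ j, satisfying |a(n,k)| ≤ (j!)² · (min_{α≠β} |ν_α² − ν_β²|)^{−j(j+1)/2}, such that for every z ∈ ℂ and every function f : ℂ → ℂ that is j-times continuously differentiable in a neighborhood of z, ∂^j f/(∂z^k ∂z̄^{j−k})(z) = Σ_{n=0}^{j} a(n,k) ∇_{ν_n}^j f(z) for each 0 ≤ k ≤ j. -/

import Mathlib

open Complex Finset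

/-- Directional derivative of `f : ℂ → ℂ` at `z` in the direction `ν`:
`∇_ν f(z) = (d/dt) f(z + tν) |_{t=0}`. -/
noncomputable def dirD (ν : ℂ) (f : ℂ → ℂ) (z : ℂ) : ℂ :=
  deriv (fun t : ℝ => f (z + (t : ℂ) * ν)) 0

/-- Iterated directional derivative `∇_ν^j f`. -/
noncomputable def dirDIter (ν : ℂ) (j : ℕ) (f : ℂ → ℂ) : ℂ → ℂ :=
  (dirD ν)^[j] f

/-- Wirtinger derivative `∂f/∂z = ½(∂f/∂x − i ∂f/∂y)`. -/
noncomputable def wD (f : ℂ → ℂ) (z : ℂ) : ℂ :=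
  (1 / 2 : ℂ) * (dirD 1 f z - Complex.I * dirD Complex.I f z)

/-- Wirtinger derivative `∂f/∂z̄ = ½(∂f/∂x + i ∂f/∂y)`. -/
noncomputable def wDbar (f : ℂ → ℂ) (z : ℂ) : ℂ :=
  (1 / 2 : ℂ) * (dirD 1 f z + Complex.I * dirD Complex.I f z)

/-- Mixed Wirtinger derivative `∂^{k+l} f / (∂z^k ∂z̄^l)`. -/
noncomputable def wMixed (k l : ℕ) (f : ℂ → ℂ) : ℂ → ℂ :=
  wD^[k] (wDbar^[l] f)

/-!
For `f` of class `C^n` near `z` the mixed Wirtinger derivatives commute, so the `n`-th power of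
`∇_ν = ν ∂/∂z + ν̄ ∂/∂z̄` expands binomially:
`∇_ν^n f(z) = ∑_k (n choose k) ν^k ν̄^(n-k) ∂^n f/(∂z^k ∂z̄^(n-k))(z)`.
For `n = j` and directions `ν₀, …, ν_j` this is a linear system whose matrix is the projective
Vandermonde matrix with entries `ν_i^k ν̄_i^(j-k)`, and the constants are read off its inverse. For
unit vectors the cofactors are determinants of size `j` with entries of modulus one, hence at most
`j!`, while the determinant has the modulus of the Vandermonde determinant of the `ν_i²`, a product
of `j(j+1)/2` distances between distinct squares.
-/

open Filter Topology
open scoped ComplexConjugate Matrix Nat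

section DirectionalDerivative

variable {f g : ℂ → ℂ} {z : ℂ} {n : ℕ}

lemma dirD_eq_lineDeriv (ν : ℂ) (f : ℂ → ℂ) (z : ℂ) : dirD ν f z = lineDeriv ℝ f z ν := by
  simp only [dirD, lineDeriv, real_smul]

lemma dirD_eq_fderiv (hf : DifferentiableAt ℝ f z) (ν : ℂ) : dirD ν f z = fderiv ℝ f z ν := by
  rw [dirD_eq_lineDeriv, hf.lineDeriv_eq_fderiv]

lemma dirD_congr (h : f =ᶠ[𝓝 z] g) (ν : ℂ) : dirD ν f z = dirD ν g z := by
  simp only [dirD_eq_lineDeriv, h.lineDeriv_eq]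

lemma dirD_const_mul (ν c : ℂ) (f : ℂ → ℂ) (z : ℂ) :
    dirD ν (fun w => c * f w) z = c * dirD ν f z :=
  deriv_const_mul_field c

lemma dirD_add (hf : DifferentiableAt ℝ f z) (hg : DifferentiableAt ℝ g z) (ν : ℂ) :
    dirD ν (fun w => f w + g w) z = dirD ν f z + dirD ν g z := by
  rw [dirD_eq_fderiv (hf.fun_add hg), dirD_eq_fderiv hf, dirD_eq_fderiv hg, fderiv_fun_add hf hg,
    _root_.add_apply]

lemma dirD_sub (hf : DifferentiableAt ℝ f z) (hg : DifferentiableAt ℝ g z) (ν : ℂ) :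
    dirD ν (fun w => f w - g w) z = dirD ν f z - dirD ν g z := by
  rw [dirD_eq_fderiv (hf.fun_sub hg), dirD_eq_fderiv hf, dirD_eq_fderiv hg, fderiv_fun_sub hf hg,
    _root_.sub_apply]

lemma dirD_sum {ι : Type*} (s : Finset ι) {F : ι → ℂ → ℂ}
    (hF : ∀ i ∈ s, DifferentiableAt ℝ (F i) z) (ν : ℂ) :
    dirD ν (fun w => ∑ i ∈ s, F i w) z = ∑ i ∈ s, dirD ν (F i) z := by
  rw [dirD_eq_fderiv (DifferentiableAt.fun_sum hF), fderiv_fun_sum hF, _root_.sum_apply]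
  exact Finset.sum_congr rfl fun i hi => (dirD_eq_fderiv (hF i hi) ν).symm

lemma dirD_eventuallyEq_fderiv (hf : ContDiffAt ℝ (n + 1 : ℕ) f z) (ν : ℂ) :
    dirD ν f =ᶠ[𝓝 z] fun w => fderiv ℝ f w ν := by
  filter_upwards [hf.eventually (by simp)] with w hw
  exact dirD_eq_fderiv (hw.differentiableAt (by simp)) ν

lemma contDiffAt_dirD (hf : ContDiffAt ℝ (n + 1 : ℕ) f z) (ν : ℂ) :
    ContDiffAt ℝ n (dirD ν f) z :=
  ((hf.fderiv_right (m := n) (by norm_cast)).clm_apply contDiffAt_const).congr_of_eventuallyEq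
    (dirD_eventuallyEq_fderiv hf ν)

lemma dirD_dirD_eq_fderiv_fderiv (hf : ContDiffAt ℝ 2 f z) (μ ν : ℂ) :
    dirD μ (dirD ν f) z = fderiv ℝ (fderiv ℝ f) z μ ν := by
  have hf' : DifferentiableAt ℝ (fderiv ℝ f) z :=
    (hf.fderiv_right (m := 1) (by norm_num)).differentiableAt one_ne_zero
  rw [dirD_congr (dirD_eventuallyEq_fderiv (n := 1) hf ν), dirD_eq_fderiv (by fun_prop),
    fderiv_clm_apply hf' (by fun_prop)]
  simp

lemma dirD_comm (hf : ContDiffAt ℝ 2 f z) (μ ν : ℂ) :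
    dirD μ (dirD ν f) z = dirD ν (dirD μ f) z := by
  simpa only [dirD_dirD_eq_fderiv_fderiv hf] using hf.isSymmSndFDerivAt (by simp) μ ν

end DirectionalDerivative

section WirtingerDerivative

variable {f g : ℂ → ℂ} {z : ℂ} {n k l : ℕ}

lemma wD_congr (h : f =ᶠ[𝓝 z] g) : wD f z = wD g z := by
  simp only [wD, dirD_congr h]

lemma contDiffAt_wD (hf : ContDiffAt ℝ (n + 1 : ℕ) f z) : ContDiffAt ℝ n (wD f) z :=
  contDiffAt_const.mul ((contDiffAt_dirD hf 1).sub (contDiffAt_const.mul (contDiffAt_dirD hf I)))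

lemma contDiffAt_wDbar (hf : ContDiffAt ℝ (n + 1 : ℕ) f z) : ContDiffAt ℝ n (wDbar f) z :=
  contDiffAt_const.mul ((contDiffAt_dirD hf 1).add (contDiffAt_const.mul (contDiffAt_dirD hf I)))

lemma contDiffAt_iterate {T : (ℂ → ℂ) → ℂ → ℂ}
    (hT : ∀ {n : ℕ} {f : ℂ → ℂ}, ContDiffAt ℝ (n + 1 : ℕ) f z → ContDiffAt ℝ n (T f) z)
    (hf : ContDiffAt ℝ (n + k : ℕ) f z) : ContDiffAt ℝ n (T^[k] f) z := by
  induction k generalizing n with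
  | zero => exact hf
  | succ k ih =>
    rw [Function.iterate_succ_apply']
    exact hT (ih (by rwa [add_right_comm]))

lemma contDiffAt_wMixed (hf : ContDiffAt ℝ (n + k + l : ℕ) f z) :
    ContDiffAt ℝ n (wMixed k l f) z :=
  contDiffAt_iterate contDiffAt_wD (contDiffAt_iterate contDiffAt_wDbar hf)

lemma dirD_wD (hf : ContDiffAt ℝ 2 f z) (ν : ℂ) :
    dirD ν (wD f) z = 1 / 2 * (dirD ν (dirD 1 f) z - I * dirD ν (dirD I f) z) := by
  have hd (μ : ℂ) : DifferentiableAt ℝ (dirD μ f) z :=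
    (contDiffAt_dirD (n := 1) hf μ).differentiableAt one_ne_zero
  unfold wD
  rw [dirD_const_mul, dirD_sub (hd 1) ((hd I).const_mul I), dirD_const_mul]

lemma dirD_wDbar (hf : ContDiffAt ℝ 2 f z) (ν : ℂ) :
    dirD ν (wDbar f) z = 1 / 2 * (dirD ν (dirD 1 f) z + I * dirD ν (dirD I f) z) := by
  have hd (μ : ℂ) : DifferentiableAt ℝ (dirD μ f) z :=
    (contDiffAt_dirD (n := 1) hf μ).differentiableAt one_ne_zero
  unfold wDbar
  rw [dirD_const_mul, dirD_add (hd 1) ((hd I).const_mul I), dirD_const_mul]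

lemma wDbar_wD_comm (hf : ContDiffAt ℝ 2 f z) : wDbar (wD f) z = wD (wDbar f) z := by
  rw [wDbar, wD, dirD_wD hf, dirD_wD hf, dirD_wDbar hf, dirD_wDbar hf, dirD_comm hf I 1]
  ring

lemma wDbar_iterate_wD (hf : ContDiffAt ℝ (k + 1 : ℕ) f z) :
    wDbar (wD^[k] f) z = wD^[k] (wDbar f) z := by
  induction k generalizing z with
  | zero => rfl
  | succ k ih =>
    have hiter : ContDiffAt ℝ 2 (wD^[k] f) z :=
      contDiffAt_iterate (n := 2) contDiffAt_wD (by rwa [add_comm 2 k])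
    have hev : wDbar (wD^[k] f) =ᶠ[𝓝 z] wD^[k] (wDbar f) := by
      filter_upwards [hf.eventually (by simp)] with w hw
      exact ih (hw.of_le (by norm_cast; omega))
    rw [Function.iterate_succ_apply', Function.iterate_succ_apply', wDbar_wD_comm hiter,
      wD_congr hev]

lemma wD_wMixed (k l : ℕ) (f : ℂ → ℂ) : wD (wMixed k l f) = wMixed (k + 1) l f :=
  (Function.iterate_succ_apply' _ _ _).symm

lemma wDbar_wMixed (hf : ContDiffAt ℝ (k + l + 1 : ℕ) f z) :
    wDbar (wMixed k l f) z = wMixed k (l + 1) f z := by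
  have hiter : ContDiffAt ℝ (k + 1 : ℕ) (wDbar^[l] f) z :=
    contDiffAt_iterate contDiffAt_wDbar (by rwa [add_right_comm])
  rw [wMixed, wDbar_iterate_wD hiter, wMixed, Function.iterate_succ_apply']

lemma dirD_eq_wD_add_wDbar (hf : DifferentiableAt ℝ f z) (ν : ℂ) :
    dirD ν f z = ν * wD f z + conj ν * wDbar f z := by
  have hν : fderiv ℝ f z ν = ν.re * fderiv ℝ f z 1 + ν.im * fderiv ℝ f z I := by
    conv_lhs => rw [show ν = ν.re • (1 : ℂ) + ν.im • I by simp [re_add_im]]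
    rw [map_add, map_smul, map_smul, real_smul, real_smul]
  have hconj : conj ν = ν.re - ν.im * I := by simp [Complex.ext_iff]
  simp only [wD, wDbar, dirD_eq_fderiv hf]
  rw [hν, hconj]
  linear_combination
    (fderiv ℝ f z 1 - I * fderiv ℝ f z I) / 2 * re_add_im ν + ν.im * fderiv ℝ f z I * I_sq

lemma dirD_wMixed (hf : ContDiffAt ℝ (k + l + 1 : ℕ) f z) (ν : ℂ) :
    dirD ν (wMixed k l f) z = ν * wMixed (k + 1) l f z + conj ν * wMixed k (l + 1) f z := by
  have hd : DifferentiableAt ℝ (wMixed k l f) z :=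
    (contDiffAt_wMixed (n := 1) (by rwa [add_assoc, add_comm 1])).differentiableAt (by simp)
  rw [dirD_eq_wD_add_wDbar hd, wD_wMixed, wDbar_wMixed hf]

theorem dirDIter_eq_sum_wMixed (hf : ContDiffAt ℝ n f z) (ν : ℂ) :
    dirDIter ν n f z = ∑ p ∈ antidiagonal n,
      (n.choose p.1 : ℂ) * (ν ^ p.1 * conj ν ^ p.2 * wMixed p.1 p.2 f z) := by
  induction n generalizing z with
  | zero => simp [dirDIter, wMixed]
  | succ n ih =>
    have hev : dirDIter ν n f =ᶠ[𝓝 z] fun w => ∑ p ∈ antidiagonal n,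
        (n.choose p.1 : ℂ) * (ν ^ p.1 * conj ν ^ p.2 * wMixed p.1 p.2 f w) := by
      filter_upwards [hf.eventually (by simp)] with w hw
      exact ih (hw.of_le (by norm_cast; omega))
    have hd : ∀ p ∈ antidiagonal n, DifferentiableAt ℝ (wMixed p.1 p.2 f) z := fun p hp =>
      (contDiffAt_wMixed (n := 1)
        (by rwa [add_assoc, mem_antidiagonal.1 hp, add_comm 1])).differentiableAt (by simp)
    rw [Finset.sum_antidiagonal_choose_succ_mul
      (fun k l => ν ^ k * conj ν ^ l * wMixed k l f z), ← Finset.sum_add_distrib, dirDIter,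
      Function.iterate_succ_apply', ← dirDIter, dirD_congr hev,
      dirD_sum _ fun p hp => ((hd p hp).const_mul _).const_mul _]
    refine Finset.sum_congr rfl fun p hp => ?_
    rw [dirD_const_mul, dirD_const_mul, dirD_wMixed (by rwa [mem_antidiagonal.1 hp]),
      ← Nat.choose_symm_of_eq_add ((add_comm _ _).trans (mem_antidiagonal.1 hp)).symm]
    ring

end WirtingerDerivative

section Determinant

variable {𝕜 : Type*} [NormedField 𝕜] {n : ℕ}

lemma norm_det_le_factorial {ι : Type*} [Fintype ι] [DecidableEq ι] {A : Matrix ι ι 𝕜}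
    (hA : ∀ i j, ‖A i j‖ ≤ 1) : ‖A.det‖ ≤ (Fintype.card ι)! := by
  simpa using Matrix.det_le (abv := IsAbsoluteValue.toAbsoluteValue (norm : 𝕜 → ℝ)) hA

lemma norm_adjugate_apply_le_factorial {A : Matrix (Fin (n + 1)) (Fin (n + 1)) 𝕜}
    (hA : ∀ i j, ‖A i j‖ ≤ 1) (i j : Fin (n + 1)) : ‖A.adjugate i j‖ ≤ n ! := by
  rw [Matrix.adjugate_fin_succ_eq_det_submatrix, norm_mul, norm_pow, norm_neg, norm_one, one_pow,
    one_mul]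
  simpa using norm_det_le_factorial (A := A.submatrix j.succAbove i.succAbove) fun _ _ => hA _ _

lemma norm_inv_apply_le_factorial_div {A : Matrix (Fin (n + 1)) (Fin (n + 1)) 𝕜}
    (hA : ∀ i j, ‖A i j‖ ≤ 1) (i j : Fin (n + 1)) : ‖A⁻¹ i j‖ ≤ n ! / ‖A.det‖ := by
  rw [Matrix.inv_def, Ring.inverse_eq_inv', Matrix.smul_apply, smul_eq_mul, norm_mul, norm_inv,
    inv_mul_eq_div]
  gcongr
  exact norm_adjugate_apply_le_factorial hA i j

lemma infsep_range_pow_choose_two_pos {X : Type*} [MetricSpace X] {x : Fin n → X}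
    (hx : Function.Injective x) : 0 < (Set.range x).infsep ^ n.choose 2 := by
  rcases lt_or_ge n 2 with hn | hn
  · simp [Nat.choose_eq_zero_of_lt hn]
  · have : Nontrivial (Fin n) := Fin.nontrivial_iff_two_le.2 hn
    have hrange : (Set.range x).Nontrivial := Set.image_univ ▸ Set.nontrivial_univ.image hx
    exact pow_pos (Set.infsep_pos_iff_nontrivial_of_finite.2 hrange) _

lemma infsep_range_pow_choose_two_le_norm_det_vandermonde {x : Fin n → 𝕜}
    (hx : Function.Injective x) :
    (Set.range x).infsep ^ n.choose 2 ≤ ‖(Matrix.vandermonde x).det‖ := by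
  have hcard : ∑ i : Fin n, #(Ioi i) = n.choose 2 := by
    simp only [Fin.card_Ioi]
    rw [Fin.sum_univ_eq_sum_range (fun i => n - 1 - i), Finset.sum_range_reflect (fun i => i),
      Finset.sum_range_id, Nat.choose_two_right]
  have hsep : ∀ i, ∀ k ∈ Ioi i, (Set.range x).infsep ≤ ‖x k - x i‖ := fun i k hk => by
    rw [← dist_eq_norm]
    exact Set.infsep_le_dist_of_mem ⟨k, rfl⟩ ⟨i, rfl⟩ (hx.ne (mem_Ioi.1 hk).ne')
  simp only [Matrix.det_vandermonde, norm_prod, ← hcard, ← Finset.prod_pow_eq_pow_sum,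
    ← Finset.prod_const]
  exact Finset.prod_le_prod
    (fun _ _ => Finset.prod_nonneg fun _ _ => Set.infsep_nonneg)
    fun i _ => Finset.prod_le_prod (fun _ _ => Set.infsep_nonneg) (hsep i)

lemma sInf_norm_sub_eq_infsep_range {ι E : Type*} [SeminormedAddCommGroup E] {x : ι → E}
    (hx : Function.Injective x) :
    sInf {d : ℝ | ∃ α β : ι, α ≠ β ∧ d = ‖x α - x β‖} = (Set.range x).infsep := by
  have himage : {d : ℝ | ∃ α β : ι, α ≠ β ∧ d = ‖x α - x β‖} =
      Function.uncurry dist '' (Set.range x).offDiag := by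
    ext d
    constructor
    · rintro ⟨α, β, hαβ, rfl⟩
      exact ⟨(x α, x β), ⟨⟨α, rfl⟩, ⟨β, rfl⟩, hx.ne hαβ⟩, dist_eq_norm _ _⟩
    · rintro ⟨_, ⟨⟨α, hα⟩, ⟨β, hβ⟩, hne⟩, rfl⟩
      refine ⟨α, β, ne_of_apply_ne x (by rwa [hα, hβ]), ?_⟩
      rw [hα, hβ, ← dist_eq_norm, Function.uncurry]
  classical
  rw [himage, sInf_image', Set.infsep_eq_iInf]
  split_ifs with h
  · rfl
  · rw [Set.offDiag_eq_empty.2 (Set.not_nontrivial_iff.1 h), Real.iInf_of_isEmpty]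

end Determinant

section DirectionMatrix

variable {f : ℂ → ℂ} {z : ℂ} {n j : ℕ}

/-- The matrix with entries `ν_i^k ν̄_i^(n-1-k)`, which expresses the directional derivatives of
order `n - 1` along the `ν_i` through the binomially weighted mixed Wirtinger derivatives. -/
noncomputable def directionMatrix (ν : Fin n → ℂ) : Matrix (Fin n) (Fin n) ℂ :=
  Matrix.projVandermonde ν fun i => conj (ν i)

/-- The coefficient of `∇_{ν_n}^j` in the expansion of `∂^j/(∂z^k ∂z̄^{j-k})`. -/
noncomputable def wirtingerCoeff (ν : Fin (j + 1) → ℂ) (n k : Fin (j + 1)) : ℂ :=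
  (directionMatrix ν)⁻¹ k n / j.choose k

theorem directionMatrix_mulVec_wMixed (hf : ContDiffAt ℝ j f z) (ν : Fin (j + 1) → ℂ) :
    directionMatrix ν *ᵥ (fun k : Fin (j + 1) => j.choose k * wMixed k (j - k) f z) =
      fun n => dirDIter (ν n) j f z := by
  ext n
  rw [dirDIter_eq_sum_wMixed hf, Finset.Nat.sum_antidiagonal_eq_sum_range_succ_mk,
    Finset.sum_range, Matrix.mulVec, dotProduct]
  refine Finset.sum_congr rfl fun k _ => ?_
  rw [directionMatrix, Matrix.projVandermonde_apply, Fin.val_rev, Nat.add_sub_add_right]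
  ring

theorem wMixed_eq_sum_wirtingerCoeff_mul_dirDIter {ν : Fin (j + 1) → ℂ}
    (hdet : (directionMatrix ν).det ≠ 0) (hf : ContDiffAt ℝ j f z) (k : Fin (j + 1)) :
    wMixed k (j - k) f z = ∑ n, wirtingerCoeff ν n k * dirDIter (ν n) j f z := by
  have hchoose : (j.choose k : ℂ) ≠ 0 := by exact_mod_cast (Nat.choose_pos k.is_le).ne'
  have hsolve : (directionMatrix ν)⁻¹ *ᵥ (fun n => dirDIter (ν n) j f z) =
      fun k : Fin (j + 1) => j.choose k * wMixed k (j - k) f z := by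
    rw [← directionMatrix_mulVec_wMixed hf, Matrix.mulVec_mulVec,
      Matrix.nonsing_inv_mul _ hdet.isUnit, Matrix.one_mulVec]
  calc wMixed k (j - k) f z
      = ((directionMatrix ν)⁻¹ *ᵥ fun n => dirDIter (ν n) j f z) k / j.choose k := by
        rw [hsolve, mul_div_cancel_left₀ _ hchoose]
    _ = ∑ n, wirtingerCoeff ν n k * dirDIter (ν n) j f z := by
        simp only [Matrix.mulVec, dotProduct, Finset.sum_div, wirtingerCoeff, mul_div_right_comm]

lemma norm_mul_conj_sub_mul_conj {z w : ℂ} (hz : ‖z‖ = 1) (hw : ‖w‖ = 1) :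
    ‖z * conj w - w * conj z‖ = ‖z ^ 2 - w ^ 2‖ := by
  have hz' : z * conj z = 1 := by simp [mul_conj', hz]
  have hw' : w * conj w = 1 := by simp [mul_conj', hw]
  have hfactor : z ^ 2 - w ^ 2 = z * w * (z * conj w - w * conj z) := by
    linear_combination w ^ 2 * hz' - z ^ 2 * hw'
  rw [hfactor, norm_mul, norm_mul, hz, hw, one_mul, one_mul]

lemma norm_det_directionMatrix {ν : Fin n → ℂ} (hν : ∀ i, ‖ν i‖ = 1) :
    ‖(directionMatrix ν).det‖ = ‖(Matrix.vandermonde fun i => ν i ^ 2).det‖ := by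
  simp only [directionMatrix, Matrix.det_projVandermonde, Matrix.det_vandermonde, norm_prod,
    norm_mul_conj_sub_mul_conj (hν _) (hν _)]

lemma norm_directionMatrix_apply {ν : Fin n → ℂ} (hν : ∀ i, ‖ν i‖ = 1) (i k : Fin n) :
    ‖directionMatrix ν i k‖ = 1 := by
  simp [directionMatrix, Matrix.projVandermonde_apply, hν]

theorem norm_wirtingerCoeff_le {ν : Fin (j + 1) → ℂ} (hν : ∀ n, ‖ν n‖ = 1)
    (hinj : Function.Injective fun n => ν n ^ 2) (n k : Fin (j + 1)) :
    ‖wirtingerCoeff ν n k‖ ≤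
      j ! / (Set.range fun n => ν n ^ 2).infsep ^ (j + 1).choose 2 := by
  have hchoose : (1 : ℝ) ≤ j.choose k := by exact_mod_cast Nat.choose_pos k.is_le
  calc ‖wirtingerCoeff ν n k‖
      = ‖(directionMatrix ν)⁻¹ k n‖ / j.choose k := by
        rw [wirtingerCoeff, norm_div, norm_natCast]
    _ ≤ ‖(directionMatrix ν)⁻¹ k n‖ := div_le_self (norm_nonneg _) hchoose
    _ ≤ j ! / ‖(directionMatrix ν).det‖ :=
        norm_inv_apply_le_factorial_div (fun i k => (norm_directionMatrix_apply hν i k).le) k n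
    _ = j ! / ‖(Matrix.vandermonde fun n => ν n ^ 2).det‖ := by rw [norm_det_directionMatrix hν]
    _ ≤ j ! / (Set.range fun n => ν n ^ 2).infsep ^ (j + 1).choose 2 := by
        gcongr
        · exact infsep_range_pow_choose_two_pos hinj
        · exact infsep_range_pow_choose_two_le_norm_det_vandermonde hinj

end DirectionMatrix

/-- Proposition 4.6(b): given unit vectors `ν₀,…,ν_j` with pairwise distinct squares,
there are constants `a(n,k)` with
`|a(n,k)| ≤ (j!)² (min_{α≠β} |ν_α² − ν_β²|)^{−j(j+1)/2}` such that
`∂^j f/(∂z^k ∂z̄^{j−k})(z) = Σ_{n=0}^j a(n,k) ∇_{ν_n}^j f(z)` whenever `f` is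
`j`-times continuously differentiable near `z`. -/
theorem statement6 (j : ℕ) (ν : Fin (j + 1) → ℂ) (hν : ∀ n, ‖ν n‖ = 1)
    (hdist : ∀ n n' : Fin (j + 1), n ≠ n' → ν n ^ 2 ≠ ν n' ^ 2) :
    ∃ a : Fin (j + 1) → Fin (j + 1) → ℂ,
      (∀ n k : Fin (j + 1), ‖a n k‖ ≤ (Nat.factorial j : ℝ) ^ 2 *
          (sInf {x : ℝ | ∃ α β : Fin (j + 1), α ≠ β ∧ x = ‖ν α ^ 2 - ν β ^ 2‖}) ^
            (-(((j * (j + 1)) / 2 : ℕ) : ℤ))) ∧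
      ∀ (z : ℂ) (f : ℂ → ℂ), ContDiffAt ℝ j f z →
        ∀ k : Fin (j + 1),
          wMixed (k : ℕ) (j - (k : ℕ)) f z =
            ∑ n : Fin (j + 1), a n k * dirDIter (ν n) j f z := by
  have hinj : Function.Injective fun n => ν n ^ 2 := fun n n' h => not_imp_not.1 (hdist n n') h
  have hdet : (directionMatrix ν).det ≠ 0 := by
    rw [← norm_ne_zero_iff, norm_det_directionMatrix hν, norm_ne_zero_iff]
    exact Matrix.det_vandermonde_ne_zero_iff.2 hinj
  refine ⟨wirtingerCoeff ν, fun n k => ?_,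
    fun z f hf => wMixed_eq_sum_wirtingerCoeff_mul_dirDIter hdet hf⟩
  have hexp : j * (j + 1) / 2 = (j + 1).choose 2 := by
    rw [Nat.choose_two_right, Nat.add_sub_cancel, mul_comm]
  have hfact : (1 : ℝ) ≤ j ! := by exact_mod_cast j.factorial_pos
  rw [sInf_norm_sub_eq_infsep_range hinj, hexp, zpow_neg, zpow_natCast, ← div_eq_mul_inv]
  calc ‖wirtingerCoeff ν n k‖
      ≤ j ! / (Set.range fun n => ν n ^ 2).infsep ^ (j + 1).choose 2 :=
        norm_wirtingerCoeff_le hν hinj n k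
    _ ≤ (j ! : ℝ) ^ 2 / (Set.range fun n => ν n ^ 2).infsep ^ (j + 1).choose 2 := by
        gcongr
        · exact (infsep_range_pow_choose_two_pos hinj).le
        · exact le_self_pow₀ hfact two_ne_zero
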